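/- arXiv:2109.00117 — 2 statements merged into one kernel-verified Lean document; each statement's English description precedes it below -/
import Mathlib

section
/- For every integer n ≥ 1, every Bergman game starting from the initial state ₀(n) has length at most n² + 2n·log_φ n + n (as a real-number bound). In particular every Bergman game from ₀(n) is finite. -/
noncomputable section

/-- The golden ratio. -/
def phi : ℝ := (1 + Real.sqrt 5) / 2

/-- Base-φ logarithm. -/
def logphi (x : ℝ) : ℝ := Real.logb phi x

/-- A Bergman state: a finitely supported function from ℤ to ℕ. -/
abbrev BState := ℤ →₀ ℕ

/-- A split move at index `i`. -/
def SplitAt (S S' : BState) (i : ℤ) : Prop :=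
  2 ≤ S i ∧
    S' = S - Finsupp.single i 2 + Finsupp.single (i + 1) 1 + Finsupp.single (i - 2) 1

/-- A combine move at index `i`. -/
def CombineAt (S S' : BState) (i : ℤ) : Prop :=
  1 ≤ S i ∧ 1 ≤ S (i + 1) ∧
    S' = S - Finsupp.single i 1 - Finsupp.single (i + 1) 1 + Finsupp.single (i + 2) 1

/-- A move is a split or a combine. -/
def Move (S S' : BState) : Prop := (∃ i, SplitAt S S' i) ∨ (∃ i, CombineAt S S' i)

/-- Terminal state: no move is legal. -/
def Terminal (S : BState) : Prop :=
  (∀ i, S i ≤ 1) ∧ ∀ i, ¬(1 ≤ S i ∧ 1 ≤ S (i + 1))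

/-- A Bergman game of length `m` from `S`. -/
def Game (S : BState) (m : ℕ) (g : ℕ → BState) : Prop :=
  g 0 = S ∧ ∀ j < m, Move (g j) (g (j + 1))

/-- A complete Bergman game of length `m` from `S`. -/
def CompleteGame (S : BState) (m : ℕ) (g : ℕ → BState) : Prop :=
  Game S m g ∧ Terminal (g m)

/-- Reachability by a finite sequence of moves. -/
def Reachable : BState → BState → Prop := Relation.ReflTransGen Move

/-- Reachability by split moves only. -/
def SplitReachable : BState → BState → Prop :=
  Relation.ReflTransGen fun S S' => ∃ i, SplitAt S S' i

/-- The initial state `₀(n)`: `n` chips at index 0. -/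
def initState (n : ℕ) : BState := Finsupp.single 0 n

/-- Total number of chips in a state. -/
def chips (S : BState) : ℕ := S.sum fun _ c => c

open Classical in
/-- The number of split moves among the first `m` steps of `g`. -/
def splitCount (g : ℕ → BState) (m : ℕ) : ℕ :=
  ((Finset.range m).filter fun j => ∃ i, SplitAt (g j) (g (j + 1)) i).card

open Classical in
/-- The number of combine moves among the first `m` steps of `g`. -/
def combineCount (g : ℕ → BState) (m : ℕ) : ℕ :=
  ((Finset.range m).filter fun j => ∃ i, CombineAt (g j) (g (j + 1)) i).card

/-!
A split lowers the sum of the chip indices by one and keeps the number `c` of chips; a combine at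
`i` changes that sum by `1 - i` and removes a chip. Hence `∑ index + d c + c (c + 1)` drops by at
least one in every move as soon as chips never lie below `2 - d - 2c`.

To find such a `d`, note that moves preserve the conjugate value `∑ ψ ^ index`. In a terminal state
this is dominated by the lowest chip, so that chip lies at or above `-d` with
`d = ⌊log_φ |∑ ψ ^ index|⌋ + 1`. Every state reaches a terminal one, and walking back from there the
lowest index never drops when a split is undone, and drops by at most two when a combine is undone,
which adds one chip.
-/

open scoped goldenRatio

theorem phi_eq_goldenRatio : phi = φ := rfl

theorem goldenConj_zpow_add_two (k : ℤ) : ψ ^ (k + 2) = ψ ^ k + ψ ^ (k + 1) := by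
  have hψ := Real.goldenConj_ne_zero
  rw [zpow_add_one₀ hψ, zpow_add₀ hψ, zpow_ofNat]
  linear_combination ψ ^ k * Real.goldenConj_sq

theorem sub_one_le_mul_logb {b x : ℝ} (hb : 1 < b) (hb' : Real.log b ≤ 1) (hx : 1 ≤ x) :
    x - 1 ≤ x * Real.logb b x := by
  have hx0 : 0 < x := one_pos.trans_le hx
  calc x - 1 = x * (1 - x⁻¹) := by field_simp
    _ ≤ x * Real.log x := by
        gcongr
        exact Real.one_sub_inv_le_log_of_pos hx0
    _ ≤ x * Real.logb b x := by
        gcongr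
        exact le_div_self (Real.log_nonneg hx) (Real.log_pos hb) hb'

theorem sub_one_le_mul_logphi {x : ℝ} (hx : 1 ≤ x) : x - 1 ≤ x * logphi x := by
  have hlog : Real.log φ ≤ 1 := by
    linarith [Real.log_le_sub_one_of_pos Real.goldenRatio_pos, Real.goldenRatio_lt_two]
  exact sub_one_le_mul_logb Real.one_lt_goldenRatio hlog hx

/-- The sum of the indices of all chips, the part of the potential that a split decreases; it is
bundled as a linear map so that additivity in the state comes for free. -/
def indexSum : BState →ₗ[ℕ] ℤ := Finsupp.linearCombination ℕ id

/-- The Galois conjugate `∑ ψ ^ index` of the number `∑ φ ^ index` represented by a state,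
which is invariant under moves and controls the lowest chip of a terminal state. -/
def conjValue : BState →ₗ[ℕ] ℝ := Finsupp.linearCombination ℕ fun k => ψ ^ k

/-- A bound on how far below index `0` the terminal states reachable from `S` extend. For `S ≠ 0`
the conjugate value is nonzero, so the logarithm takes no junk value. -/
def depth (S : BState) : ℤ := ⌊logphi |conjValue S|⌋ + 1

/-- The quantity that drops by at least one in every move. -/
def potential (S : BState) : ℤ := indexSum S + depth S * chips S + chips S * (chips S + 1)

variable {S S' T : BState} {b i k l : ℤ}

theorem indexSum_single (i : ℤ) (c : ℕ) : indexSum (Finsupp.single i c) = c * i := by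
  simp [indexSum]

theorem conjValue_single (i : ℤ) (c : ℕ) : conjValue (Finsupp.single i c) = c * ψ ^ i := by
  simp [conjValue]

theorem chips_eq_degree (S : BState) : chips S = S.degree := rfl

theorem chips_add (S T : BState) : chips (S + T) = chips S + chips T := by
  simp only [chips_eq_degree, map_add]

theorem chips_single (i : ℤ) (c : ℕ) : chips (Finsupp.single i c) = c := by
  simp only [chips_eq_degree, Finsupp.degree_single]

theorem chips_pos_iff : 0 < chips S ↔ S ≠ 0 := by
  rw [chips_eq_degree, Nat.pos_iff_ne_zero, Ne, Finsupp.degree_eq_zero_iff]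

theorem chips_pos_of_mem_support (hk : k ∈ S.support) : 0 < chips S :=
  chips_pos_iff.2 <| Finsupp.support_nonempty_iff.1 ⟨k, hk⟩

theorem card_support_le_chips (S : BState) : S.support.card ≤ chips S := by
  rw [Finset.card_eq_sum_ones]
  exact Finset.sum_le_sum fun k hk => Nat.one_le_iff_ne_zero.2 (Finsupp.mem_support_iff.1 hk)

theorem mul_chips_le_indexSum (hb : ∀ k ∈ S.support, b ≤ k) : b * chips S ≤ indexSum S := by
  simp only [chips, indexSum, Finsupp.linearCombination_apply, Finsupp.sum, id, nsmul_eq_mul,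
    Nat.cast_sum, Finset.mul_sum]
  refine Finset.sum_le_sum fun k hk => ?_
  rw [mul_comm]
  exact mul_le_mul_of_nonneg_left (hb k hk) (Nat.cast_nonneg _)

namespace SplitAt

theorem exists_eq_add (h : SplitAt S S' i) :
    ∃ R : BState, S = R + Finsupp.single i 2 ∧
      S' = R + Finsupp.single (i + 1) 1 + Finsupp.single (i - 2) 1 :=
  ⟨S - Finsupp.single i 2, (tsub_add_cancel_of_le (Finsupp.single_le_iff.2 h.1)).symm, h.2⟩

theorem chips_eq (h : SplitAt S S' i) : chips S' = chips S := by
  obtain ⟨R, rfl, rfl⟩ := h.exists_eq_add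
  simp only [chips_add, chips_single]

theorem indexSum_eq (h : SplitAt S S' i) : indexSum S' = indexSum S - 1 := by
  obtain ⟨R, rfl, rfl⟩ := h.exists_eq_add
  simp only [map_add, indexSum_single]
  push_cast
  ring

theorem conjValue_eq (h : SplitAt S S' i) : conjValue S' = conjValue S := by
  obtain ⟨R, rfl, rfl⟩ := h.exists_eq_add
  have hψ : ψ ^ (i + 1) + ψ ^ (i - 2) = 2 * ψ ^ i := by
    have h1 := goldenConj_zpow_add_two (i - 1)
    have h2 := goldenConj_zpow_add_two (i - 2)
    rw [show i - 1 + 2 = i + 1 by ring, sub_add_cancel] at h1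
    rw [show i - 2 + 1 = i - 1 by ring, sub_add_cancel] at h2
    linarith
  simp only [map_add, conjValue_single]
  push_cast
  linear_combination hψ

theorem mem_support (h : SplitAt S S' i) : i ∈ S.support :=
  Finsupp.mem_support_iff.2 (by have := h.1; omega)

theorem sub_two_mem_support (h : SplitAt S S' i) : i - 2 ∈ S'.support := by
  obtain ⟨R, rfl, rfl⟩ := h.exists_eq_add
  simp

theorem mem_support_or_of_mem_support_left (h : SplitAt S S' i) (hk : k ∈ S.support) :
    k ∈ S'.support ∨ k = i := by
  obtain ⟨R, rfl, rfl⟩ := h.exists_eq_add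
  simp only [Finsupp.mem_support_iff, Finsupp.add_apply, Finsupp.single_apply] at hk ⊢
  split_ifs at hk ⊢ <;> omega

theorem mem_support_or_of_mem_support_right (h : SplitAt S S' i) (hk : k ∈ S'.support) :
    k ∈ S.support ∨ k = i + 1 ∨ k = i - 2 := by
  obtain ⟨R, rfl, rfl⟩ := h.exists_eq_add
  simp only [Finsupp.mem_support_iff, Finsupp.add_apply, Finsupp.single_apply] at hk ⊢
  split_ifs at hk ⊢ <;> omega

theorem insert_erase_support_subset (h : SplitAt S S' i) :
    insert (i - 2) (insert (i + 1) (S.support.erase i)) ⊆ S'.support := by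
  obtain ⟨R, rfl, rfl⟩ := h.exists_eq_add
  grind [Finsupp.add_apply]

theorem card_insert_erase_support (h : SplitAt S S' i) (h0 : S (i + 1) = 0) :
    (insert (i + 1) (S.support.erase i)).card = S.support.card := by
  rw [Finset.card_insert_of_notMem (by simp [h0]), Finset.card_erase_add_one h.mem_support]

theorem card_support_le (h : SplitAt S S' i) (h0 : S (i + 1) = 0) :
    S.support.card ≤ S'.support.card := by
  rw [← h.card_insert_erase_support h0]
  exact Finset.card_le_card <| (Finset.subset_insert _ _).trans h.insert_erase_support_subset

theorem card_support_lt (h : SplitAt S S' i) (h0 : S (i + 1) = 0) (h2 : S (i - 2) = 0) :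
    S.support.card < S'.support.card := by
  have hnotMem : i - 2 ∉ insert (i + 1) (S.support.erase i) := by
    rw [Finset.mem_insert, Finset.mem_erase, Finsupp.mem_support_iff]
    omega
  rw [← Nat.add_one_le_iff, ← h.card_insert_erase_support h0,
    ← Finset.card_insert_of_notMem hnotMem]
  exact Finset.card_le_card h.insert_erase_support_subset

end SplitAt

namespace CombineAt

theorem exists_eq_add (h : CombineAt S S' i) :
    ∃ R : BState, S = R + Finsupp.single i 1 + Finsupp.single (i + 1) 1 ∧
      S' = R + Finsupp.single (i + 2) 1 := by
  refine ⟨S - Finsupp.single i 1 - Finsupp.single (i + 1) 1, ?_, h.2.2⟩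
  have hle : Finsupp.single i 1 + Finsupp.single (i + 1) 1 ≤ S := by
    intro k
    have h1 := h.1
    have h2 := h.2.1
    simp only [Finsupp.add_apply, Finsupp.single_apply]
    split_ifs <;> subst_vars <;> omega
  rw [tsub_tsub, add_assoc, tsub_add_cancel_of_le hle]

theorem chips_eq (h : CombineAt S S' i) : chips S = chips S' + 1 := by
  obtain ⟨R, rfl, rfl⟩ := h.exists_eq_add
  simp only [chips_add, chips_single]

theorem indexSum_eq (h : CombineAt S S' i) : indexSum S' = indexSum S + 1 - i := by
  obtain ⟨R, rfl, rfl⟩ := h.exists_eq_add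
  simp only [map_add, indexSum_single]
  push_cast
  ring

theorem conjValue_eq (h : CombineAt S S' i) : conjValue S' = conjValue S := by
  obtain ⟨R, rfl, rfl⟩ := h.exists_eq_add
  simp only [map_add, conjValue_single, goldenConj_zpow_add_two]
  push_cast
  ring

theorem mem_support (h : CombineAt S S' i) : i ∈ S.support :=
  Finsupp.mem_support_iff.2 (Nat.one_le_iff_ne_zero.1 h.1)

theorem add_two_mem_support (h : CombineAt S S' i) : i + 2 ∈ S'.support := by
  obtain ⟨R, rfl, rfl⟩ := h.exists_eq_add
  simp

theorem mem_support_or_of_mem_support_left (h : CombineAt S S' i) (hk : k ∈ S.support) :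
    k ∈ S'.support ∨ k = i ∨ k = i + 1 := by
  obtain ⟨R, rfl, rfl⟩ := h.exists_eq_add
  simp only [Finsupp.mem_support_iff, Finsupp.add_apply, Finsupp.single_apply] at hk ⊢
  split_ifs at hk ⊢ <;> omega

theorem mem_support_or_of_mem_support_right (h : CombineAt S S' i) (hk : k ∈ S'.support) :
    k ∈ S.support ∨ k = i + 2 := by
  obtain ⟨R, rfl, rfl⟩ := h.exists_eq_add
  simp only [Finsupp.mem_support_iff, Finsupp.add_apply, Finsupp.single_apply] at hk ⊢
  split_ifs at hk ⊢ <;> omega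

theorem card_support_le (h : CombineAt S S' i) : S.support.card ≤ S'.support.card + 2 := by
  have hsub : S.support ⊆ S'.support ∪ {i, i + 1} := fun k hk => by
    simpa only [Finset.mem_union, Finset.mem_insert, Finset.mem_singleton] using
      h.mem_support_or_of_mem_support_left hk
  exact (Finset.card_le_card hsub).trans <|
    (Finset.card_union_le _ _).trans (Nat.add_le_add_left Finset.card_le_two _)

end CombineAt

/-- Every chip of `S` lies at or above `b + 4c - 2s`, where `c` is the number of chips and `s` the
number of occupied indices. The coefficients make this an invariant of combines and of those splits
at `i` that happen while `i + 1` is empty, which suffices to reach a terminal state. -/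
def HasRoom (b : ℤ) (S : BState) : Prop :=
  ∀ k ∈ S.support, b + 4 * chips S - 2 * S.support.card ≤ k

theorem exists_hasRoom (S : BState) : ∃ b, HasRoom b S := by
  obtain ⟨l, hl⟩ := S.support.bddBelow
  refine ⟨l - 4 * chips S, fun k hk => ?_⟩
  have := hl hk
  omega

namespace HasRoom

theorem add_two_mul_chips_le (hb : HasRoom b S) (hk : k ∈ S.support) : b + 2 * chips S ≤ k := by
  have := hb k hk
  have := card_support_le_chips S
  omega

theorem mul_chips_le_indexSum (hb : HasRoom b S) : b * chips S ≤ indexSum S :=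
  _root_.mul_chips_le_indexSum fun k hk => by
    have := hb.add_two_mul_chips_le hk
    omega

theorem splitAt (hb : HasRoom b S) (h : SplitAt S S' i) (h0 : S (i + 1) = 0) : HasRoom b S' := by
  intro k hk
  have hi := hb i h.mem_support
  have hkS := hb k
  have hcard := h.card_support_le h0
  rw [h.chips_eq]
  by_cases h2 : i - 2 ∈ S.support
  · have := hb _ h2
    rcases h.mem_support_or_of_mem_support_right hk with hk | rfl | rfl <;> grind
  · have := h.card_support_lt h0 (Finsupp.notMem_support_iff.1 h2)
    rcases h.mem_support_or_of_mem_support_right hk with hk | rfl | rfl <;> grind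

theorem combineAt (hb : HasRoom b S) (h : CombineAt S S' i) : HasRoom b S' := by
  intro k hk
  have hi := hb i h.mem_support
  have hkS := hb k
  have hcard := h.card_support_le
  have hchips := h.chips_eq
  rcases h.mem_support_or_of_mem_support_right hk with hk | rfl <;> grind

theorem exists_move (hb : HasRoom b S) (hS : ¬ Terminal S) :
    ∃ S', Move S S' ∧ HasRoom b S' ∧
      indexSum S' - b * chips S' < indexSum S - b * chips S := by
  by_cases hcombine : ∃ i, 1 ≤ S i ∧ 1 ≤ S (i + 1)
  · obtain ⟨i, hi, hi'⟩ := hcombine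
    have h : CombineAt S _ i := ⟨hi, hi', rfl⟩
    refine ⟨_, .inr ⟨i, h⟩, hb.combineAt h, ?_⟩
    have hroom := hb.add_two_mul_chips_le h.mem_support
    rw [h.indexSum_eq]
    rw [h.chips_eq] at hroom ⊢
    push_cast at hroom ⊢
    linarith
  · obtain ⟨i, hi⟩ : ∃ i, 2 ≤ S i := by
      by_contra! hlt
      exact hS ⟨fun i => Nat.le_of_lt_succ (hlt i), not_exists.1 hcombine⟩
    have h0 : S (i + 1) = 0 := by
      by_contra h0
      exact hcombine ⟨i, by omega, by omega⟩
    have h : SplitAt S _ i := ⟨hi, rfl⟩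
    refine ⟨_, .inl ⟨i, h⟩, hb.splitAt h h0, ?_⟩
    rw [h.indexSum_eq, h.chips_eq]
    linarith

theorem exists_reachable_terminal (hb : HasRoom b S) : ∃ T, Reachable S T ∧ Terminal T := by
  induction hN : (indexSum S - b * chips S).toNat using Nat.strong_induction_on generalizing S with
  | _ N ih =>
    by_cases hS : Terminal S
    · exact ⟨S, .refl, hS⟩
    · obtain ⟨S', hmove, hb', hlt⟩ := hb.exists_move hS
      have hnonneg := hb'.mul_chips_le_indexSum
      obtain ⟨T, hT, hterm⟩ := ih _ (by omega) hb' rfl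
      exact ⟨T, hT.head hmove, hterm⟩

end HasRoom

theorem exists_reachable_terminal (S : BState) : ∃ T, Reachable S T ∧ Terminal T :=
  let ⟨_, hb⟩ := exists_hasRoom S
  hb.exists_reachable_terminal

theorem conjValue_div_eq_add_erase (S : BState) (l : ℤ) :
    conjValue S / ψ ^ l = S l + ψ * (conjValue (S.erase l) / ψ ^ (l + 1)) := by
  have hψ := Real.goldenConj_ne_zero
  conv_lhs => rw [← Finsupp.single_add_erase l S, map_add, conjValue_single]
  rw [add_div, mul_div_cancel_right₀ _ (zpow_ne_zero l hψ), zpow_add_one₀ hψ, ← mul_div_assoc,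
    mul_comm ψ, mul_div_mul_right _ _ hψ]

-- The interval `[-1, φ]` is mapped into itself by both `y ↦ ψ y` and `y ↦ 1 + ψ y`.
theorem conjValue_div_mem_Icc_of_lt (hS : ∀ k, S k ≤ 1) {N : ℕ}
    (hl : ∀ k ∈ S.support, l ≤ k ∧ k < l + N) : conjValue S / ψ ^ l ∈ Set.Icc (-1) φ := by
  induction N generalizing S l with
  | zero =>
    have hzero : S = 0 := by
      rw [← Finsupp.support_eq_empty, Finset.eq_empty_iff_forall_notMem]
      intro k hk
      have := hl k hk
      omega
    simp [hzero, Real.goldenRatio_pos.le]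
  | succ N ih =>
    have herase : ∀ k, S.erase l k ≤ 1 := fun k => by
      rw [Finsupp.erase_apply]
      split_ifs
      exacts [zero_le_one, hS k]
    obtain ⟨hlower, hupper⟩ := ih (l := l + 1) herase fun k hk => by
      rw [Finsupp.support_erase, Finset.mem_erase] at hk
      have := hl k hk.2
      omega
    have hSl : (S l : ℝ) ≤ 1 := by exact_mod_cast hS l
    rw [conjValue_div_eq_add_erase]
    have := mul_le_mul_of_nonpos_left hlower Real.goldenConj_neg.le
    have := mul_le_mul_of_nonpos_left hupper Real.goldenConj_neg.le
    constructor <;>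
      linarith [(S l).cast_nonneg (α := ℝ), Real.goldenConj_mul_goldenRatio,
        Real.one_sub_goldenRatio]

theorem neg_one_le_conjValue_div (hS : ∀ k, S k ≤ 1) (hl : ∀ k ∈ S.support, l ≤ k) :
    -1 ≤ conjValue S / ψ ^ l := by
  obtain ⟨u, hu⟩ := S.support.bddAbove
  refine (conjValue_div_mem_Icc_of_lt (N := (u - l + 1).toNat) hS fun k hk => ?_).1
  have := hl k hk
  have := hu hk
  omega

namespace Terminal

theorem inv_goldenRatio_le_conjValue_div (hT : Terminal T) (hmem : l ∈ T.support)
    (hl : ∀ k ∈ T.support, l ≤ k) : φ⁻¹ ≤ conjValue T / ψ ^ l := by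
  have hTl : T l = 1 := by
    have := hT.1 l
    have := Finsupp.mem_support_iff.1 hmem
    omega
  have hTl' : T (l + 1) = 0 := by
    have := hT.2 l
    omega
  have htail : -1 ≤ conjValue ((T.erase l).erase (l + 1)) / ψ ^ (l + 1 + 1) := by
    refine neg_one_le_conjValue_div (fun k => ?_) fun k hk => ?_
    · have := hT.1 k
      simp only [Finsupp.erase_apply]
      split_ifs <;> omega
    · simp only [Finsupp.support_erase, Finset.mem_erase] at hk
      have := hl k hk.2.2
      omega
  rw [conjValue_div_eq_add_erase, conjValue_div_eq_add_erase, Finsupp.erase_ne (by omega), hTl,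
    hTl', Real.inv_goldenRatio]
  have := mul_le_mul_of_nonneg_left htail (sq_nonneg ψ)
  push_cast
  linarith [Real.goldenConj_sq]

theorem goldenRatio_zpow_le_abs_conjValue (hT : Terminal T) (hk : k ∈ T.support) :
    φ ^ (-k - 1) ≤ |conjValue T| := by
  set l := T.support.min' ⟨k, hk⟩
  have hlead : φ⁻¹ ≤ conjValue T / ψ ^ l :=
    hT.inv_goldenRatio_le_conjValue_div (Finset.min'_mem _ _) fun k hk => Finset.min'_le _ k hk
  have habs : |ψ| ^ l = φ ^ (-l) := by
    rw [abs_of_neg Real.goldenConj_neg, ← Real.inv_goldenRatio, inv_zpow']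
  calc φ ^ (-k - 1)
      ≤ φ ^ (-l - 1) := by
        gcongr
        exacts [Real.one_lt_goldenRatio.le, Finset.min'_le _ k hk]
    _ = φ ^ (-l) * φ⁻¹ := zpow_sub_one₀ Real.goldenRatio_ne_zero _
    _ ≤ φ ^ (-l) * |conjValue T / ψ ^ l| := by
        gcongr
        exact hlead.trans (le_abs_self _)
    _ = |conjValue T| := by
        rw [← habs, ← abs_zpow, ← abs_mul,
          mul_div_cancel₀ _ (zpow_ne_zero _ Real.goldenConj_ne_zero)]

theorem neg_depth_le (hT : Terminal T) (hk : k ∈ T.support) : -depth T ≤ k := by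
  have hzpow := hT.goldenRatio_zpow_le_abs_conjValue hk
  have hpos : 0 < |conjValue T| := (zpow_pos Real.goldenRatio_pos _).trans_le hzpow
  have hlog : -k - 1 ≤ ⌊logphi |conjValue T|⌋ := by
    rw [Int.le_floor, logphi, phi_eq_goldenRatio,
      Real.le_logb_iff_rpow_le Real.one_lt_goldenRatio hpos, Real.rpow_intCast]
    exact hzpow
  rw [depth]
  omega

theorem two_le_potential (hT : Terminal T) (hne : T ≠ 0) : 2 ≤ potential T := by
  have hindex := mul_chips_le_indexSum fun k => hT.neg_depth_le (k := k)
  have hchips : (1 : ℤ) ≤ chips T := by exact_mod_cast chips_pos_iff.2 hne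
  rw [potential]
  nlinarith

end Terminal

namespace Move

theorem conjValue_eq (h : Move S S') : conjValue S' = conjValue S := by
  obtain ⟨i, h⟩ | ⟨i, h⟩ := h
  exacts [h.conjValue_eq, h.conjValue_eq]

theorem depth_eq (h : Move S S') : depth S' = depth S := by
  rw [depth, depth, h.conjValue_eq]

theorem ne_zero (h : Move S S') : S' ≠ 0 := by
  obtain ⟨i, h⟩ | ⟨i, h⟩ := h
  exacts [Finsupp.support_nonempty_iff.1 ⟨_, h.sub_two_mem_support⟩,
    Finsupp.support_nonempty_iff.1 ⟨_, h.add_two_mem_support⟩]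

theorem sub_two_mul_chips_le (h : Move S S') (hb : ∀ k ∈ S'.support, b - 2 * chips S' ≤ k)
    (hk : k ∈ S.support) : b - 2 * chips S ≤ k := by
  have hbk := hb k
  obtain ⟨i, h⟩ | ⟨i, h⟩ := h
  · have hi := hb _ h.sub_two_mem_support
    have hchips := h.chips_eq
    rcases h.mem_support_or_of_mem_support_left hk with hk' | rfl <;> grind
  · have hi := hb _ h.add_two_mem_support
    have hchips := h.chips_eq
    rcases h.mem_support_or_of_mem_support_left hk with hk' | rfl | rfl <;> grind

end Move

namespace Reachable

theorem depth_eq (h : Reachable S T) : depth T = depth S := by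
  induction h with
  | refl => rfl
  | tail _ hmove ih => rw [hmove.depth_eq, ih]

theorem ne_zero (h : Reachable S T) (hS : S ≠ 0) : T ≠ 0 := by
  cases h with
  | refl => exact hS
  | tail _ hmove => exact hmove.ne_zero

theorem sub_two_mul_chips_le (h : Reachable S T) (hb : ∀ k ∈ T.support, b - 2 * chips T ≤ k) :
    ∀ k ∈ S.support, b - 2 * chips S ≤ k := by
  induction h using Relation.ReflTransGen.head_induction_on with
  | refl => exact hb
  | head hmove _ ih => exact fun k hk => hmove.sub_two_mul_chips_le ih hk

end Reachable

theorem two_sub_depth_sub_two_mul_chips_le (hk : k ∈ S.support) :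
    2 - depth S - 2 * chips S ≤ k := by
  obtain ⟨T, hreach, hT⟩ := exists_reachable_terminal S
  refine hreach.sub_two_mul_chips_le (fun j hj => ?_) k hk
  have := hT.neg_depth_le hj
  have := hreach.depth_eq
  have := chips_pos_of_mem_support hj
  omega

theorem Move.potential_add_one_le (h : Move S S') : potential S' + 1 ≤ potential S := by
  rw [potential, potential, h.depth_eq]
  obtain ⟨i, h⟩ | ⟨i, h⟩ := h
  · rw [h.chips_eq, h.indexSum_eq]
    linarith
  · have hi := two_sub_depth_sub_two_mul_chips_le h.mem_support
    rw [h.indexSum_eq]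
    rw [h.chips_eq] at hi ⊢
    push_cast at hi ⊢
    linarith

theorem Reachable.potential_le (h : Reachable S T) : potential T ≤ potential S := by
  induction h with
  | refl => rfl
  | tail _ hmove ih => linarith [hmove.potential_add_one_le]

theorem two_le_potential (hS : S ≠ 0) : 2 ≤ potential S := by
  obtain ⟨T, hreach, hT⟩ := exists_reachable_terminal S
  exact (hT.two_le_potential (hreach.ne_zero hS)).trans hreach.potential_le

namespace Game

variable {m : ℕ} {g : ℕ → BState}

theorem of_succ (hg : Game S (m + 1) g) : Game S m g :=
  ⟨hg.1, fun j hj => hg.2 j (hj.trans m.lt_succ_self)⟩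

theorem reachable (hg : Game S m g) : Reachable S (g m) := by
  induction m with
  | zero => exact hg.1 ▸ .refl
  | succ m ih => exact (ih hg.of_succ).tail (hg.2 m m.lt_succ_self)

theorem add_potential_le (hg : Game S m g) : m + potential (g m) ≤ potential S := by
  induction m with
  | zero => simp [hg.1]
  | succ m ih =>
    have := ih hg.of_succ
    have := (hg.2 m m.lt_succ_self).potential_add_one_le
    push_cast
    linarith

end Game

theorem bergman_game_length_upper_bound_general (S : BState) (hS : S ≠ 0)
    (m : ℕ) (g : ℕ → BState) (hg : Game S m g) :
    (m : ℝ) ≤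
      indexSum S + (chips S : ℝ) ^ 2 + chips S * logphi |conjValue S| + 2 * chips S - 2 := by
  have hlength : (m : ℤ) + 2 ≤ potential S := by
    linarith [hg.add_potential_le, two_le_potential (hg.reachable.ne_zero hS)]
  have hdepth : (depth S : ℝ) * chips S ≤ (logphi |conjValue S| + 1) * chips S := by
    rw [depth]
    push_cast
    gcongr
    exact Int.floor_le _
  rw [potential] at hlength
  have hlengthReal : (m : ℝ) + 2 ≤
      indexSum S + depth S * chips S + chips S * (chips S + 1) := by
    exact_mod_cast hlength
  linarith

/-- Every Bergman game from `₀(n)` has length at most `n² + 2n·log_φ n + n`;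
in particular every Bergman game from `₀(n)` is finite. -/
theorem bergman_game_length_upper_bound (n : ℕ) (hn : 1 ≤ n)
    (m : ℕ) (g : ℕ → BState) (hg : Game (initState n) m g) :
    (m : ℝ) ≤ (n : ℝ) ^ 2 + 2 * n * logphi n + n := by
  have hne : initState n ≠ 0 := Finsupp.single_ne_zero.2 (Nat.one_le_iff_ne_zero.1 hn)
  have hlength := bergman_game_length_upper_bound_general _ hne m g hg
  simp only [initState, indexSum_single, chips_single, conjValue_single, zpow_zero, mul_one,
    mul_zero, Int.cast_zero, Nat.abs_cast] at hlength
  linarith [sub_one_le_mul_logphi (Nat.one_le_cast.2 hn : (1 : ℝ) ≤ n)]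
end
end

section
/- Let n ≥ 1 and let T be a state reachable from ₀(n) by Bergman moves in which every entry is 0 or 1 and whose total chip count ∑_i T i equals n. Let i₀ be the least index with T i₀ = 1, and suppose (i₀ : ℝ) ≤ −L for some real L ≥ log_φ n + 3, and set z = ⌊(L − log_φ n − 3)/2⌋. Then there exists an index i with T i = 1 and (i : ℝ) ≤ −n − z + log_φ n + 1. -/
noncomputable section

/-!
Moves preserve the value of a state in base `φ`, so the occupied indices `i` of `T` satisfy
`∑ φ ^ i = n`, and `∑ ψ ^ i = n` by conjugation, where `ψ = -1/φ`. The sum at `φ` bounds the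
occupied indices above by `log_φ n`. The sum at `ψ` forces gaps on the left: if `i₀` is the least
occupied index and lies far enough to the left, the large leading term `ψ ^ i₀` has to be cancelled
down to `n`, and since every tail `∑ ψ ^ k` over distinct `k ≥ 0` lies in `(-1, φ)`, this is only
possible if the digits from `i₀` on read `1 1 0 1 0 1 0 …`, where
`ψ ^ a + ψ ^ (a + 1) = ψ ^ (a + 2)` is used over and over. Counting the occupied indices together
with these gaps inside `[i₀, log_φ n]` bounds `i₀`.
-/

open scoped goldenRatio

section ValueOfState

variable {K : Type*} [Field K] {x : K}

lemma ne_zero_of_sq_eq_add_one (hx : x ^ 2 = x + 1) : x ≠ 0 := by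
  rintro rfl
  simp at hx

lemma zpow_add_zpow_add_one_of_sq_eq (hx : x ^ 2 = x + 1) (i : ℤ) :
    x ^ i + x ^ (i + 1) = x ^ (i + 2) := by
  have hx₀ := ne_zero_of_sq_eq_add_one hx
  rw [zpow_add₀ hx₀, zpow_add₀ hx₀, zpow_one, zpow_ofNat, hx]
  ring

lemma two_mul_zpow_of_sq_eq (hx : x ^ 2 = x + 1) (i : ℤ) :
    2 * x ^ i = x ^ (i + 1) + x ^ (i - 2) := by
  have hup := zpow_add_zpow_add_one_of_sq_eq hx (i - 1)
  have hdown := zpow_add_zpow_add_one_of_sq_eq hx (i - 2)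
  ring_nf at hup hdown ⊢
  linear_combination hup - hdown

lemma zpow_eq_intFib_mul_add_of_sq_eq (hx : x ^ 2 = x + 1) (i : ℤ) :
    x ^ i = Int.fib i * x + Int.fib (i - 1) := by
  have hx₀ := ne_zero_of_sq_eq_add_one hx
  induction i with
  | zero => simp
  | succ i ih =>
    have hfib : Int.fib (i + 1) = Int.fib (i - 1) + Int.fib i := by
      simpa [sub_add] using Int.fib_add_two (i - 1)
    rw [zpow_add_one₀ hx₀, ih, hfib, add_sub_cancel_right]
    push_cast
    linear_combination (Int.fib i : K) * hx
  | pred i ih =>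
    have hfib : Int.fib (-i) = Int.fib (-i - 1 - 1) + Int.fib (-i - 1) := by
      simpa [sub_add] using Int.fib_add_two (-i - 1 - 1)
    rw [zpow_sub_one₀ hx₀, ih, ← div_eq_mul_inv, div_eq_iff hx₀, hfib]
    push_cast
    linear_combination -(Int.fib (-i - 1) : K) * hx

lemma SplitAt.exists_eq_add_s6 {S S' : BState} {i : ℤ} (h : SplitAt S S' i) :
    ∃ R, S = R + Finsupp.single i 2 ∧
      S' = R + Finsupp.single (i + 1) 1 + Finsupp.single (i - 2) 1 :=
  ⟨S - Finsupp.single i 2, (tsub_add_cancel_of_le (by simpa using h.1)).symm, h.2⟩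

lemma CombineAt.exists_eq_add_s6 {S S' : BState} {i : ℤ} (h : CombineAt S S' i) :
    ∃ R, S = R + (Finsupp.single i 1 + Finsupp.single (i + 1) 1) ∧
      S' = R + Finsupp.single (i + 2) 1 := by
  obtain ⟨hi, hi', rfl⟩ := h
  refine ⟨_, (tsub_add_cancel_of_le fun j => ?_).symm, by rw [tsub_tsub]⟩
  simp only [Finsupp.add_apply, Finsupp.single_apply]
  grind

namespace BState

/-- The number that a state represents in base `x`, where a chip at index `i` stands for `x ^ i`:
the invariant of the game when `x ^ 2 = x + 1`. It is bundled as an additive map. -/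
def value (x : K) : BState →ₗ[ℕ] K :=
  Finsupp.linearCombination ℕ fun i : ℤ => x ^ i

lemma value_single (x : K) (i : ℤ) (c : ℕ) : value x (Finsupp.single i c) = c * x ^ i := by
  simp [value]

lemma value_initState (x : K) (n : ℕ) : value x (initState n) = n := by
  simp [initState, value_single]

lemma value_eq_of_move (hx : x ^ 2 = x + 1) {S S' : BState} (h : Move S S') :
    value x S' = value x S := by
  rcases h with ⟨i, hsplit⟩ | ⟨i, hcombine⟩
  · obtain ⟨R, rfl, rfl⟩ := hsplit.exists_eq_add_s6
    simp only [map_add, value_single, Nat.cast_one, Nat.cast_ofNat, one_mul,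
      two_mul_zpow_of_sq_eq hx]
    ring
  · obtain ⟨R, rfl, rfl⟩ := hcombine.exists_eq_add_s6
    simp only [map_add, value_single, Nat.cast_one, one_mul, zpow_add_zpow_add_one_of_sq_eq hx]

lemma value_eq_of_reachable (hx : x ^ 2 = x + 1) {S T : BState} (h : Reachable S T) :
    value x T = value x S := by
  induction h with
  | refl => rfl
  | tail _ hmove ih => exact (value_eq_of_move hx hmove).trans ih

lemma exists_int_value_eq_mul_add (K : Type*) [Field K] (S : BState) :
    ∃ a b : ℤ, ∀ x : K, x ^ 2 = x + 1 → value x S = a * x + b := by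
  refine ⟨S.sum fun i c => c * Int.fib i, S.sum fun i c => c * Int.fib (i - 1), fun x hx => ?_⟩
  simp only [value, Finsupp.linearCombination_apply, Finsupp.sum, nsmul_eq_mul, Int.cast_sum,
    Int.cast_mul, Int.cast_natCast, Finset.sum_mul, ← Finset.sum_add_distrib]
  exact Finset.sum_congr rfl fun i _ => by rw [zpow_eq_intFib_mul_add_of_sq_eq hx]; ring

lemma value_goldenConj_eq_of_value_goldenRatio_eq {S : BState} {m : ℤ} (h : value φ S = m) :
    value ψ S = m := by
  obtain ⟨a, b, hab⟩ := exists_int_value_eq_mul_add ℝ S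
  have hφ : a * φ + b = m := (hab φ Real.goldenRatio_sq).symm.trans h
  have ha : a = 0 := by
    by_contra ha
    exact ((Real.goldenRatio_irrational.intCast_mul ha).add_intCast b).ne_int m hφ
  rw [← hφ, hab ψ Real.goldenConj_sq, ha]
  simp

lemma eq_one_of_mem_support {T : BState} (h01 : ∀ i, T i ≤ 1) {i : ℤ} (hi : i ∈ T.support) :
    T i = 1 :=
  le_antisymm (h01 i) (Nat.one_le_iff_ne_zero.2 (Finsupp.mem_support_iff.1 hi))

lemma value_eq_sum_support {T : BState} (h01 : ∀ i, T i ≤ 1) (x : K) :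
    value x T = ∑ i ∈ T.support, x ^ i :=
  Finset.sum_congr rfl fun i hi => by simp [eq_one_of_mem_support h01 hi]

lemma chips_eq_card_support {T : BState} (h01 : ∀ i, T i ≤ 1) : chips T = T.support.card := by
  rw [Finset.card_eq_sum_ones]
  exact Finset.sum_congr rfl fun i hi => eq_one_of_mem_support h01 hi

end BState

end ValueOfState

section TailValue

/-- The value in base `x` of the digits of `A` at indices at least `a`, rescaled so that index `a`
has weight `1`. -/
def tailValue {K : Type*} [Field K] (x : K) (A : Finset ℤ) (a : ℤ) : K :=
  ∑ k ∈ A with a ≤ k, x ^ (k - a)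

section Field

variable {K : Type*} [Field K] {x : K} {A : Finset ℤ} {a : ℤ}

lemma sum_zpow_eq_zpow_mul_tailValue (hx : x ≠ 0) (ha : ∀ k ∈ A, a ≤ k) :
    ∑ k ∈ A, x ^ k = x ^ a * tailValue x A a := by
  rw [tailValue, Finset.filter_true_of_mem ha, Finset.mul_sum]
  exact Finset.sum_congr rfl fun k _ => by rw [← zpow_add₀ hx, add_sub_cancel]

lemma tailValue_eq_zero (ha : ∀ k ∈ A, k < a) : tailValue x A a = 0 := by
  rw [tailValue, Finset.filter_false_of_mem fun k hk => (ha k hk).not_ge, Finset.sum_empty]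

lemma tailValue_of_notMem (hx : x ≠ 0) (ha : a ∉ A) :
    tailValue x A a = x * tailValue x A (a + 1) := by
  have hfilter : {k ∈ A | a ≤ k} = {k ∈ A | a + 1 ≤ k} :=
    Finset.filter_congr fun k hk => by grind
  rw [tailValue, tailValue, hfilter, Finset.mul_sum]
  exact Finset.sum_congr rfl fun k _ => by rw [← zpow_one_add₀ hx]; ring_nf

lemma tailValue_of_mem (hx : x ≠ 0) (ha : a ∈ A) :
    tailValue x A a = 1 + x * tailValue x A (a + 1) := by
  have hfilter : {k ∈ A | a ≤ k} = insert a {k ∈ A | a + 1 ≤ k} := by grind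
  rw [tailValue, tailValue, hfilter, Finset.sum_insert (by simp), sub_self, zpow_zero,
    Finset.mul_sum]
  congr 1
  exact Finset.sum_congr rfl fun k _ => by rw [← zpow_one_add₀ hx]; ring_nf

end Field

lemma goldenConj_mul_mem_Ioo {t : ℝ} (ht : t ∈ Set.Ioo (-1) φ) : ψ * t ∈ Set.Ioo (-1) (-ψ) :=
  ⟨by simpa using mul_lt_mul_of_neg_left ht.2 Real.goldenConj_neg,
    by simpa using mul_lt_mul_of_neg_left ht.1 Real.goldenConj_neg⟩

-- The interval `(-1, φ)` is mapped into itself by both `t ↦ ψ t` and `t ↦ 1 + ψ t`.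
lemma tailValue_goldenConj_mem_Ioo (A : Finset ℤ) (a : ℤ) :
    tailValue ψ A a ∈ Set.Ioo (-1) φ := by
  obtain ⟨M, hM⟩ := A.bddAbove
  obtain ⟨N, hN⟩ : ∃ N : ℕ, M < a + N := ⟨(M - a + 1).toNat, by omega⟩
  induction N generalizing a with
  | zero =>
    rw [tailValue_eq_zero fun k hk => (hM hk).trans_lt (by simpa using hN)]
    exact ⟨by norm_num, Real.goldenRatio_pos⟩
  | succ N ih =>
    obtain ⟨hlower, hupper⟩ := goldenConj_mul_mem_Ioo (ih (a + 1) (by push_cast at hN; omega))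
    by_cases ha : a ∈ A
    · rw [tailValue_of_mem Real.goldenConj_ne_zero ha]
      constructor <;> linarith [Real.goldenRatio_add_goldenConj]
    · rw [tailValue_of_notMem Real.goldenConj_ne_zero ha]
      constructor <;> linarith [Real.goldenRatio_add_goldenConj]

/-- The value in base `ψ` of the digits of `A` at indices at least `a`, rescaled so that index `a`
has weight `1`, when the digit at `a` is set to `1` whether or not `a ∈ A`. It is the quantity that
remains to be cancelled when carries have produced a chip at `a`. -/
def carryValue (A : Finset ℤ) (a : ℤ) : ℝ :=
  1 + ψ * tailValue ψ A (a + 1)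

variable {A : Finset ℤ} {a : ℤ}

lemma add_one_mem_of_carryValue_le (h : carryValue A a ≤ ψ ^ 2) : a + 1 ∈ A := by
  by_contra ha
  rw [carryValue, tailValue_of_notMem Real.goldenConj_ne_zero ha] at h
  have htail : ψ * -ψ < ψ * (ψ * tailValue ψ A (a + 1 + 1)) :=
    mul_lt_mul_of_neg_left (goldenConj_mul_mem_Ioo (tailValue_goldenConj_mem_Ioo A _)).2
      Real.goldenConj_neg
  have hsq : ψ ^ 2 < -ψ := by nlinarith [Real.goldenConj_neg, Real.neg_one_lt_goldenConj]
  linarith [Real.goldenConj_sq]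

-- The chips at `a` and `a + 1` are carried to `a + 2`.
lemma carryValue_eq_of_add_one_mem (h : a + 1 ∈ A) :
    carryValue A a = ψ ^ 2 * (1 + tailValue ψ A (a + 2)) := by
  rw [carryValue, tailValue_of_mem Real.goldenConj_ne_zero h, add_assoc a 1 1, one_add_one_eq_two]
  linear_combination -Real.goldenConj_sq

lemma add_two_notMem_of_carryValue_le (h : carryValue A a ≤ ψ ^ 2) : a + 2 ∉ A := by
  intro ha
  rw [carryValue_eq_of_add_one_mem (add_one_mem_of_carryValue_le h),
    tailValue_of_mem Real.goldenConj_ne_zero ha] at h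
  have htail := (goldenConj_mul_mem_Ioo (tailValue_goldenConj_mem_Ioo A (a + 2 + 1))).1
  have hle := (mul_le_iff_le_one_right (sq_pos_of_neg Real.goldenConj_neg)).1 h
  linarith

lemma carryValue_eq_sq_mul_carryValue_add_two (h : carryValue A a ≤ ψ ^ 2) :
    carryValue A a = ψ ^ 2 * carryValue A (a + 2) := by
  rw [carryValue_eq_of_add_one_mem (add_one_mem_of_carryValue_le h),
    tailValue_of_notMem Real.goldenConj_ne_zero (add_two_notMem_of_carryValue_le h), carryValue]

lemma add_two_mul_notMem_of_carryValue_le {m : ℕ}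
    (h : carryValue A a ≤ ψ ^ (2 * (m + 1))) : a + 2 * (m + 1) ∉ A := by
  have hsq_pos : 0 < ψ ^ 2 := sq_pos_of_neg Real.goldenConj_neg
  have hsq_le_one : ψ ^ 2 ≤ 1 := by linarith [Real.goldenConj_sq, Real.goldenConj_neg]
  have hle_sq {a' : ℤ} {m' : ℕ} (h' : carryValue A a' ≤ ψ ^ (2 * (m' + 1))) :
      carryValue A a' ≤ ψ ^ 2 := by
    rw [pow_mul] at h'
    exact h'.trans (pow_le_of_le_one hsq_pos.le hsq_le_one m'.succ_ne_zero)
  induction m generalizing a with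
  | zero => simpa using add_two_notMem_of_carryValue_le (hle_sq h)
  | succ m ih =>
    have hnext : carryValue A (a + 2) ≤ ψ ^ (2 * (m + 1)) := by
      rw [carryValue_eq_sq_mul_carryValue_add_two (hle_sq h), mul_add_one 2 (m + 1), pow_add,
        mul_comm (ψ ^ (2 * (m + 1)))] at h
      exact le_of_mul_le_mul_left h hsq_pos
    have hshift : a + 2 * ((m + 1 : ℕ) + 1) = a + 2 + 2 * (m + 1) := by push_cast; ring
    rw [hshift]
    exact ih hnext

end TailValue

section DigitSets

variable {A : Finset ℤ} {i₀ : ℤ}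

lemma abs_goldenConj : |ψ| = φ⁻¹ := by
  rw [abs_of_neg Real.goldenConj_neg, Real.inv_goldenRatio]

lemma add_two_mul_notMem_of_abs_sum_le (hmin : IsLeast (A : Set ℤ) i₀) {m : ℕ}
    (h : |∑ k ∈ A, ψ ^ k| ≤ φ ^ (-(i₀ + 2 * (m + 1)))) : i₀ + 2 * (m + 1) ∉ A := by
  have hψ := Real.goldenConj_ne_zero
  refine add_two_mul_notMem_of_carryValue_le ?_
  rw [sum_zpow_eq_zpow_mul_tailValue hψ fun k hk => hmin.2 hk, abs_mul, abs_zpow, abs_goldenConj,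
    inv_zpow', neg_add, zpow_add₀ Real.goldenRatio_ne_zero] at h
  calc carryValue A i₀ = tailValue ψ A i₀ := (tailValue_of_mem hψ hmin.1).symm
    _ ≤ |tailValue ψ A i₀| := le_abs_self _
    _ ≤ φ ^ (-(2 * (m + 1)) : ℤ) := le_of_mul_le_mul_left h (zpow_pos Real.goldenRatio_pos _)
    _ = |ψ| ^ (2 * (m + 1)) := by rw [abs_goldenConj, ← inv_zpow']; norm_cast
    _ = ψ ^ (2 * (m + 1)) := (even_two_mul _).pow_abs ψ

lemma add_two_mul_notMem_of_le_neg_logb (hmin : IsLeast (A : Set ℤ) i₀) {x : ℝ} (hx : 0 < x)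
    (hψ : |∑ k ∈ A, ψ ^ k| ≤ x) {m : ℕ} (hm : i₀ + 2 * (m + 1) ≤ -Real.logb φ x) :
    i₀ + 2 * (m + 1) ∉ A := by
  refine add_two_mul_notMem_of_abs_sum_le hmin (hψ.trans ?_)
  rw [← Real.rpow_intCast, ← Real.logb_le_iff_le_rpow Real.one_lt_goldenRatio hx]
  push_cast
  linarith

lemma le_logb_of_sum_zpow_le {b x : ℝ} (hb : 1 < b) (hx : ∑ k ∈ A, b ^ k ≤ x) {i : ℤ}
    (hi : i ∈ A) : (i : ℝ) ≤ Real.logb b x := by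
  have hpos (k : ℤ) : 0 < b ^ k := zpow_pos (by linarith) k
  have hle : b ^ i ≤ x := (Finset.single_le_sum (fun k _ => (hpos k).le) hi).trans hx
  rwa [Real.le_logb_iff_rpow_le hb ((hpos i).trans_le hle), Real.rpow_intCast]

lemma card_add_le_of_add_two_mul_notMem {B : ℤ} {j : ℕ} (hA : A ⊆ Finset.Icc i₀ B)
    (hj : i₀ + 2 * j ≤ B) (hgap : ∀ m < j, i₀ + 2 * (m + 1) ∉ A) :
    (A.card : ℤ) + j ≤ B + 1 - i₀ := by
  let gaps : Finset ℤ := (Finset.range j).image fun m : ℕ => i₀ + 2 * (m + 1)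
  have hcard : gaps.card = j := by
    rw [Finset.card_image_of_injective _ fun m m' h => by grind, Finset.card_range]
  have hdisj : Disjoint A gaps := by
    rw [Finset.disjoint_right]
    simpa [gaps] using hgap
  have hgaps : gaps ⊆ Finset.Icc i₀ B := by
    grind
  have hle := Finset.card_le_card (Finset.union_subset hA hgaps)
  rw [Finset.card_union_of_disjoint hdisj, hcard, Int.card_Icc] at hle
  omega

theorem card_add_le_floor_logb (hmin : IsLeast (A : Set ℤ) i₀) {x : ℝ} (hx : 1 ≤ x)
    (hφ : ∑ k ∈ A, φ ^ k ≤ x) (hψ : |∑ k ∈ A, ψ ^ k| ≤ x) {z : ℤ}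
    (hz : i₀ + 2 * z ≤ -Real.logb φ x) :
    A.card + z ≤ ⌊Real.logb φ x⌋ + 1 - i₀ := by
  have hsubset : A ⊆ Finset.Icc i₀ ⌊Real.logb φ x⌋ := fun i hi => Finset.mem_Icc.2
    ⟨hmin.2 hi, Int.le_floor.2 (le_logb_of_sum_zpow_le Real.one_lt_goldenRatio hφ hi)⟩
  have hgap : ∀ m < z.toNat, i₀ + 2 * (m + 1) ∉ A := fun m hm => by
    refine add_two_mul_notMem_of_le_neg_logb hmin (by linarith) hψ ?_
    have hmz : (m : ℝ) + 1 ≤ z := by exact_mod_cast (by omega : (m : ℤ) + 1 ≤ z)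
    linarith
  have hlast : i₀ + 2 * z.toNat ≤ ⌊Real.logb φ x⌋ := by
    have hlog : 0 ≤ Real.logb φ x := Real.logb_nonneg Real.one_lt_goldenRatio hx
    have hi₀z : i₀ + 2 * z ≤ ⌊Real.logb φ x⌋ := Int.le_floor.2 (by push_cast; linarith)
    have hi₀ : i₀ ≤ ⌊Real.logb φ x⌋ := (Finset.mem_Icc.1 (hsubset hmin.1)).2
    omega
  have hcard := card_add_le_of_add_two_mul_notMem hsubset hlast hgap
  omega

end DigitSets

theorem bergman_left_bound_iterate_general {n : ℕ} {T : BState} (hT : BState.value phi T = n)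
    (h01 : ∀ i, T i ≤ 1) {i₀ : ℤ} (hi₀ : T i₀ = 1) (hleast : ∀ j < i₀, T j = 0)
    {L : ℝ} (hpos : (i₀ : ℝ) ≤ -L) :
    (i₀ : ℝ) ≤ -(chips T : ℝ) - ⌊(L - logphi n) / 2⌋ + logphi n + 1 := by
  have hmin : IsLeast (T.support : Set ℤ) i₀ :=
    ⟨by simp [hi₀], fun j hj => not_lt.1 fun hlt => by simp [hleast j hlt] at hj⟩
  have hφ : ∑ i ∈ T.support, φ ^ i = n := (BState.value_eq_sum_support h01 φ).symm.trans hT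
  have hψ : ∑ i ∈ T.support, ψ ^ i = n := by
    rw [← BState.value_eq_sum_support h01]
    exact_mod_cast BState.value_goldenConj_eq_of_value_goldenRatio_eq (m := n) (mod_cast hT)
  have hn : (0 : ℝ) < n := hφ ▸
    Finset.sum_pos (fun i _ => zpow_pos Real.goldenRatio_pos i) ⟨i₀, hmin.1⟩
  have hz : (i₀ : ℝ) + 2 * ⌊(L - logphi n) / 2⌋ ≤ -logphi n := by
    linarith [Int.floor_le ((L - logphi n) / 2)]
  have hcard : (T.support.card : ℝ) + ⌊(L - logphi n) / 2⌋ ≤ ⌊logphi n⌋ + 1 - i₀ :=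
    mod_cast card_add_le_floor_logb hmin (mod_cast hn) hφ.le (by simp [hψ]) hz
  rw [BState.chips_eq_card_support h01]
  linarith [Int.floor_le (logphi n)]

/-- If `T` is a 0-1 state reachable from `₀(n)` with chip count `n` whose least occupied
index `i₀` satisfies `i₀ ≤ −L` with `L ≥ log_φ n + 3`, and `z = ⌊(L − log_φ n − 3)/2⌋`,
then some chip of `T` lies at an index at most `−n − z + log_φ n + 1`. -/
theorem bergman_left_bound_iterate (n : ℕ) (hn : 1 ≤ n)
    (T : BState) (hT : Reachable (initState n) T)
    (h01 : ∀ i, T i ≤ 1) (hchips : chips T = n)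
    (i₀ : ℤ) (hi₀ : T i₀ = 1) (hleast : ∀ j < i₀, T j = 0)
    (L : ℝ) (hL : logphi n + 3 ≤ L) (hpos : (i₀ : ℝ) ≤ -L)
    (z : ℤ) (hz : z = ⌊(L - logphi n - 3) / 2⌋) :
    ∃ i : ℤ, T i = 1 ∧ (i : ℝ) ≤ -(n : ℝ) - z + logphi n + 1 := by
  have hvalue : BState.value phi T = n :=
    (BState.value_eq_of_reachable Real.goldenRatio_sq hT).trans (BState.value_initState phi n)
  have hbound := bergman_left_bound_iterate_general hvalue h01 hi₀ hleast hpos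
  have hfloor : (z : ℝ) ≤ ⌊(L - logphi n) / 2⌋ := by
    rw [hz]
    exact_mod_cast Int.floor_le_floor (by linarith)
  exact ⟨i₀, hi₀, by rw [hchips] at hbound; linarith⟩
end
end
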